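/- For complex α₁, α₂, α₃, α₄ with appropriate real parts ensuring convergence, ∑_{n≥1} σ_{α₁-α₂}(n)·σ_{1+α₁+α₂+α₃-α₄}(n)/n^{1+α₁+α₃} = ζ(1+α₁+α₃)·ζ(1+α₂+α₃)·ζ(α₄-α₁)·ζ(α₄-α₂)/ζ(1+α₃+α₄). -/

import Mathlib

/-- Divisor sum function with complex exponent: `σ_v(n) = ∑_{d ∣ n} d^v`. -/
noncomputable def csigma (v : ℂ) (n : ℕ) : ℂ := ∑ d ∈ n.divisors, (d : ℂ) ^ v

lemma hasSum_mul_complex {ι κ : Type*} {f : ι → ℂ} {g : κ → ℂ} {a b : ℂ}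
    (hf : HasSum f a) (hg : HasSum g b) :
    HasSum (fun x : ι × κ => f x.1 * g x.2) (a * b) := by
  have h := summable_mul_of_summable_norm hf.summable.norm hg.summable.norm
  exact hf.mul hg h

lemma hasSum_zeta_pnat {s : ℂ} (hs : 1 < s.re) :
    HasSum (fun n : ℕ+ => ((n : ℕ) : ℂ) ^ (-s)) (riemannZeta s) := by
  have h0 : HasSum (fun n : ℕ => ((n : ℕ) : ℂ) ^ (-s)) (riemannZeta s) := by
    rw [zeta_eq_tsum_one_div_nat_cpow hs]
    have := (Complex.summable_one_div_nat_cpow.mpr hs).hasSum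
    simpa [Complex.cpow_neg] using this
  have hinj : Function.Injective (fun n : ℕ+ => (n : ℕ)) := PNat.coe_injective
  refine (hinj.hasSum_iff (f := fun n : ℕ => ((n : ℕ) : ℂ) ^ (-s)) ?_).mpr h0
  intro x hx
  have : x = 0 := by
    by_contra hne
    exact hx ⟨⟨x, Nat.pos_of_ne_zero hne⟩, rfl⟩
  subst this
  have : -s ≠ 0 := by
    intro h
    have : s = 0 := by simpa using h
    rw [this] at hs
    norm_num at hs
  simp only [Nat.cast_zero]
  exact Complex.zero_cpow this

abbrev CoPair := {p : ℕ+ × ℕ+ // Nat.Coprime (p.1 : ℕ) (p.2 : ℕ)}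

lemma copair_inj {g h : ℕ+} {p q : CoPair} (h1 : g * p.1.1 = h * q.1.1)
    (h2 : g * p.1.2 = h * q.1.2) : g = h ∧ p = q := by
  have e1 : (g : ℕ) * p.1.1 = h * q.1.1 := by exact_mod_cast congrArg PNat.val h1
  have e2 : (g : ℕ) * p.1.2 = h * q.1.2 := by exact_mod_cast congrArg PNat.val h2
  have hg : g = h := by
    apply PNat.eq
    have a1 : Nat.gcd (g * p.1.1) (g * p.1.2) = g := by
      rw [Nat.gcd_mul_left, p.2.gcd_eq_one, mul_one]
    have a2 : Nat.gcd (h * q.1.1) (h * q.1.2) = h := by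
      rw [Nat.gcd_mul_left, q.2.gcd_eq_one, mul_one]
    rw [← a1, ← a2, e1, e2]
  subst hg
  refine ⟨rfl, Subtype.ext (Prod.ext ?_ ?_)⟩
  · exact mul_left_cancel h1
  · exact mul_left_cancel h2

lemma copair_surj (d e : ℕ+) : ∃ (g : ℕ+) (p : CoPair), g * p.1.1 = d ∧ g * p.1.2 = e := by
  obtain ⟨a, b, hab, ha, hb⟩ := Nat.exists_coprime (d : ℕ) (e : ℕ)
  have hgpos : 0 < Nat.gcd d e := Nat.gcd_pos_of_pos_left _ d.pos
  have hapos : 0 < a := Nat.pos_of_ne_zero (by rintro rfl; simp at ha)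
  have hbpos : 0 < b := Nat.pos_of_ne_zero (by rintro rfl; simp at hb)
  refine ⟨⟨_, hgpos⟩, ⟨(⟨a, hapos⟩, ⟨b, hbpos⟩), hab⟩, ?_, ?_⟩
  · apply PNat.eq
    exact (mul_comm _ _).trans ha.symm
  · apply PNat.eq
    exact (mul_comm _ _).trans hb.symm

noncomputable def copairEquiv : ℕ+ × CoPair ≃ ℕ+ × ℕ+ :=
  Equiv.ofBijective (fun x => (x.1 * x.2.1.1, x.1 * x.2.1.2)) (by
    constructor
    · rintro ⟨g, p⟩ ⟨h, q⟩ hh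
      obtain ⟨rfl, rfl⟩ := copair_inj (congrArg Prod.fst hh) (congrArg Prod.snd hh)
      rfl
    · rintro ⟨d, e⟩
      obtain ⟨g, p, h1, h2⟩ := copair_surj d e
      exact ⟨(g, p), Prod.ext h1 h2⟩)

lemma copairEquiv_apply (g : ℕ+) (p : CoPair) :
    copairEquiv (g, p) = (g * p.1.1, g * p.1.2) := rfl

lemma pn_mul (m n : ℕ+) (s : ℂ) :
    (((m * n : ℕ+) : ℕ) : ℂ) ^ s = ((m : ℕ) : ℂ) ^ s * ((n : ℕ) : ℂ) ^ s := by
  rw [PNat.mul_coe, Nat.cast_mul, Complex.natCast_mul_natCast_cpow]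

lemma pn_add (m : ℕ+) (s t : ℂ) :
    ((m : ℕ) : ℂ) ^ (s + t) = ((m : ℕ) : ℂ) ^ s * ((m : ℕ) : ℂ) ^ t :=
  Complex.cpow_add _ _ (by exact_mod_cast m.ne_zero)

/-- Sum over coprime pairs. -/
lemma hasSum_copair {u v : ℂ} (hu : 1 < u.re) (hv : 1 < v.re) :
    HasSum (fun p : CoPair => ((p.1.1 : ℕ) : ℂ) ^ (-u) * ((p.1.2 : ℕ) : ℂ) ^ (-v))
      (riemannZeta u * riemannZeta v / riemannZeta (u + v)) := by
  have huv : 1 < (u + v).re := by rw [Complex.add_re]; linarith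
  have hall := hasSum_mul_complex (hasSum_zeta_pnat hu) (hasSum_zeta_pnat hv)
  have hC : Summable
      (fun p : CoPair => ((p.1.1 : ℕ) : ℂ) ^ (-u) * ((p.1.2 : ℕ) : ℂ) ^ (-v)) :=
    hall.summable.subtype {p : ℕ+ × ℕ+ | Nat.Coprime (p.1 : ℕ) (p.2 : ℕ)}
  have h1 := hasSum_mul_complex (hasSum_zeta_pnat huv) hC.hasSum
  have h2 := (copairEquiv.hasSum_iff).mpr hall
  have h3 := h1.unique (by
    convert h2 using 1
    ext ⟨g, p⟩
    simp only [Function.comp, copairEquiv_apply, pn_mul, neg_add, pn_add]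
    ring)
  rw [← h3, mul_div_cancel_left₀ _ (riemannZeta_ne_zero_of_one_le_re huv.le)]
  exact hC.hasSum

abbrev Quad := ℕ+ × (ℕ+ × CoPair)

def quadProd (x : Quad) : ℕ+ := x.1 * (x.2.1 * (x.2.2.1.1 * x.2.2.1.2))

noncomputable def fibEquiv (n : ℕ+) : {x : Quad // quadProd x = n} ≃
    ((n : ℕ).divisors ×ˢ (n : ℕ).divisors : Finset (ℕ × ℕ)) :=
  Equiv.ofBijective (fun x => ⟨(((x.1.2.1 * x.1.2.2.1.1 : ℕ+) : ℕ), ((x.1.2.1 * x.1.2.2.1.2 : ℕ+) : ℕ)), by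
      obtain ⟨⟨m, g, ⟨⟨a, b⟩, hab⟩⟩, hx⟩ := x
      subst hx
      rw [Finset.mem_product, Nat.mem_divisors, Nat.mem_divisors]
      simp only [quadProd, PNat.mul_coe]
      have hne : (m : ℕ) * (g * (a * b)) ≠ 0 := by positivity
      exact ⟨⟨⟨m * b, by ring⟩, hne⟩, ⟨⟨m * a, by ring⟩, hne⟩⟩⟩) (by
    constructor
    · rintro ⟨⟨m, g, p⟩, hx⟩ ⟨⟨m', g', p'⟩, hx'⟩ hh
      have hh' := Subtype.ext_iff.mp hh
      obtain ⟨rfl, rfl⟩ := copair_inj (PNat.eq (congrArg Prod.fst hh'))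
        (PNat.eq (congrArg Prod.snd hh'))
      have : m = m' := mul_right_cancel (hx.trans hx'.symm)
      subst this
      rfl
    · rintro ⟨⟨d, e⟩, hde⟩
      simp only [Finset.mem_product, Nat.mem_divisors] at hde
      obtain ⟨⟨hd, hn⟩, he, -⟩ := hde
      have hdp := Nat.pos_of_dvd_of_pos hd n.pos
      have hep := Nat.pos_of_dvd_of_pos he n.pos
      obtain ⟨g, p, h1, h2⟩ := copair_surj ⟨d, hdp⟩ ⟨e, hep⟩
      have e1 : (g : ℕ) * p.1.1 = d := congrArg PNat.val h1
      have e2 : (g : ℕ) * p.1.2 = e := congrArg PNat.val h2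
      have hl : (g : ℕ) * (p.1.1 * p.1.2) ∣ n := by
        have := Nat.lcm_dvd hd he
        rwa [← e1, ← e2, Nat.lcm_mul_left, p.2.lcm_eq_mul] at this
      obtain ⟨m, hm⟩ := hl
      have hmp : 0 < m := Nat.pos_of_ne_zero (by rintro rfl; simp at hm)
      refine ⟨⟨(⟨m, hmp⟩, g, p), ?_⟩, ?_⟩
      · apply PNat.eq
        rw [hm]
        change m * ((g : ℕ) * (p.1.1 * p.1.2)) = _
        ring
      · apply Subtype.ext
        exact Prod.ext e1 e2)

lemma ramanujan_hasSum {a b s : ℂ} (h1 : 1 < s.re) (h2 : 1 < (s - a).re)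
    (h3 : 1 < (s - b).re) (h4 : 1 < (s - a - b).re) :
    HasSum (fun n : ℕ+ => csigma a n * csigma b n / ((n : ℕ) : ℂ) ^ s)
      (riemannZeta s * (riemannZeta (s - a - b) *
        (riemannZeta (s - a) * riemannZeta (s - b) / riemannZeta (s - a + (s - b))))) := by
  have hQ := hasSum_mul_complex (hasSum_zeta_pnat h1)
    (hasSum_mul_complex (hasSum_zeta_pnat h4) (hasSum_copair h2 h3))
  have hS := ((Equiv.sigmaFiberEquiv quadProd).hasSum_iff).mpr hQ
  refine hS.sigma fun n => ?_
  rw [← (fibEquiv n).symm.hasSum_iff]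
  have hfin := Finset.hasSum ((n : ℕ).divisors ×ˢ (n : ℕ).divisors)
    (fun p : ℕ × ℕ => (p.1 : ℂ) ^ a * (p.2 : ℂ) ^ b * ((n : ℕ) : ℂ) ^ (-s))
  have hval : csigma a n * csigma b n / ((n : ℕ) : ℂ) ^ s =
      ∑ p ∈ (n : ℕ).divisors ×ˢ (n : ℕ).divisors,
        (p.1 : ℂ) ^ a * (p.2 : ℂ) ^ b * ((n : ℕ) : ℂ) ^ (-s) := by
    rw [← Finset.sum_mul, csigma, csigma, Finset.sum_mul_sum, Finset.sum_product,
      Complex.cpow_neg, div_eq_mul_inv]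
  rw [hval]
  refine (congrArg (fun F => HasSum F _) ?_).mpr hfin
  · ext y
    obtain ⟨x, rfl⟩ := (fibEquiv n).surjective y
    obtain ⟨⟨m, g, p⟩, hx⟩ := x
    subst hx
    simp only [Function.comp, Equiv.symm_apply_apply]
    change ((m : ℕ) : ℂ) ^ (-s) * (((g : ℕ) : ℂ) ^ (-(s - a - b)) *
        (((p.1.1 : ℕ) : ℂ) ^ (-(s - a)) * ((p.1.2 : ℕ) : ℂ) ^ (-(s - b)))) =
      (((g * p.1.1 : ℕ+) : ℕ) : ℂ) ^ a * (((g * p.1.2 : ℕ+) : ℕ) : ℂ) ^ b *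
        (((m * (g * (p.1.1 * p.1.2)) : ℕ+) : ℕ) : ℂ) ^ (-s)
    have r1 : -(s - a - b) = -s + a + b := by ring
    have r2 : -(s - a) = -s + a := by ring
    have r3 : -(s - b) = -s + b := by ring
    simp only [r1, r2, r3, pn_mul, pn_add]
    ring

theorem ramanujan_specialized (α₁ α₂ α₃ α₄ : ℂ)
    (h1 : 1 < (1 + α₁ + α₃).re) (h2 : 1 < (1 + α₂ + α₃).re)
    (h3 : 1 < (α₄ - α₂).re) (h4 : 1 < (α₄ - α₁).re) :
    ∑' n : ℕ+, csigma (α₁ - α₂) n * csigma (1 + α₁ + α₂ + α₃ - α₄) n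
        / ((n : ℕ) : ℂ) ^ (1 + α₁ + α₃)
      = riemannZeta (1 + α₁ + α₃) * riemannZeta (1 + α₂ + α₃)
        * riemannZeta (α₄ - α₁) * riemannZeta (α₄ - α₂)
        / riemannZeta (1 + α₃ + α₄) := by
  have e2 : 1 + α₁ + α₃ - (α₁ - α₂) = 1 + α₂ + α₃ := by ring
  have e3 : 1 + α₁ + α₃ - (1 + α₁ + α₂ + α₃ - α₄) = α₄ - α₂ := by ring
  have e4 : 1 + α₂ + α₃ - (1 + α₁ + α₂ + α₃ - α₄) = α₄ - α₁ := by ring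
  have e5 : 1 + α₂ + α₃ + (α₄ - α₂) = 1 + α₃ + α₄ := by ring
  have h := ramanujan_hasSum (a := α₁ - α₂) (b := 1 + α₁ + α₂ + α₃ - α₄)
    (s := 1 + α₁ + α₃) h1 (by rwa [e2]) (by rwa [e3]) (by rwa [e2, e4])
  rw [e2, e3, e4, e5] at h
  rw [h.tsum_eq]
  ring
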